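/- Let N be a positive integer, let 2 < q < 3, and let f, g, h : Z/NZ → ℂ be functions such that sup_{r ∈ Z/NZ} |ĥ(r)| ≤ ε and the ℓ^q norms satisfy (∑_r |f̂(r)|^q)^{1/q} ≤ M, (∑_r |ĝ(r)|^q)^{1/q} ≤ M, (∑_r |ĥ(r)|^q)^{1/q} ≤ M, for some ε, M > 0. Then for every x ∈ Z/NZ, |∑_{y,z ∈ Z/NZ} f(y) g(z) h(x − y − z)| ≤ M^q ε^{3−q} / N. -/

import Mathlib

/-- The (unnormalized) Fourier transform on `ℤ/Nℤ`:
`f̂(r) = ∑_{x} f(x) e^{2πi r x / N}`. -/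
noncomputable def zmodFourier {N : ℕ} [NeZero N] (f : ZMod N → ℂ) (r : ZMod N) : ℂ :=
  ∑ x : ZMod N, f x * Complex.exp (2 * (Real.pi : ℂ) * Complex.I * ((r * x).val : ℂ) / (N : ℂ))

/-- The Fourier transform in terms of the standard additive character. -/
theorem zmodFourier_eq_std {N : ℕ} [NeZero N] (f : ZMod N → ℂ) (r : ZMod N) :
    zmodFourier f r = ∑ x : ZMod N, f x * ZMod.stdAddChar (r * x) := by
  unfold zmodFourier
  refine Finset.sum_congr rfl fun x _ => ?_
  rw [ZMod.stdAddChar_apply, ZMod.toCircle_apply]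

/-- Fourier inversion for the ternary convolution. -/
theorem ternary_inversion {N : ℕ} [NeZero N] (f g h : ZMod N → ℂ) (x : ZMod N) :
    (N : ℂ) * ∑ y : ZMod N, ∑ z : ZMod N, f y * g z * h (x - y - z) =
      ∑ r : ZMod N, zmodFourier f r * zmodFourier g r * zmodFourier h r *
        ZMod.stdAddChar (-(r * x)) := by
  have key : ∀ r : ZMod N, zmodFourier f r * zmodFourier g r * zmodFourier h r *
        ZMod.stdAddChar (-(r * x)) = ∑ y : ZMod N, ∑ z : ZMod N, ∑ w : ZMod N,
          f y * g z * h w * ZMod.stdAddChar (r * (w - (x - y - z))) := by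
    intro r
    simp only [zmodFourier_eq_std]
    rw [Finset.sum_mul_sum, Finset.sum_mul, Finset.sum_mul]
    refine Finset.sum_congr rfl fun y _ => ?_
    rw [Finset.sum_mul, Finset.sum_mul]
    refine Finset.sum_congr rfl fun z _ => ?_
    rw [Finset.mul_sum, Finset.sum_mul]
    refine Finset.sum_congr rfl fun w _ => ?_
    have : r * (w - (x - y - z)) = r * y + r * z + r * w + -(r * x) := by ring
    rw [this, AddChar.map_add_eq_mul, AddChar.map_add_eq_mul, AddChar.map_add_eq_mul]
    ring
  simp only [key]
  rw [Finset.mul_sum]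
  refine Eq.trans ?_ Finset.sum_comm
  refine Finset.sum_congr rfl fun y _ => ?_
  rw [Finset.mul_sum]
  refine Eq.trans ?_ Finset.sum_comm
  refine Finset.sum_congr rfl fun z _ => ?_
  trans ∑ w : ZMod N, f y * g z * h w * ∑ r : ZMod N, (ZMod.stdAddChar (r * (w - (x - y - z))) : ℂ)
  swap
  · rw [Finset.sum_comm]
    exact Finset.sum_congr rfl fun w _ => Finset.mul_sum _ _ _
  have h1 : ∀ w : ZMod N, ∑ r : ZMod N, (ZMod.stdAddChar (r * (w - (x - y - z))) : ℂ) =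
      if w = x - y - z then (N : ℂ) else 0 := by
    intro w
    rw [AddChar.sum_mulShift _ (ZMod.isPrimitive_stdAddChar N)]
    simp [sub_eq_zero, ZMod.card]
  simp only [h1]
  simp
  ring

/-- From an `ℓ^q` norm bound to a bound on the sum of powers. -/
theorem sum_le_of_norm_le {q M S : ℝ} (hq : 0 < q) (hS : 0 ≤ S) (h : S ^ (1 / q) ≤ M) :
    S ≤ M ^ q := by
  have := Real.rpow_le_rpow (Real.rpow_nonneg hS _) h hq.le
  rwa [← Real.rpow_mul hS, one_div_mul_cancel hq.ne', Real.rpow_one] at this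

/-- Pointwise Young-type inequality. -/
theorem pointwise_young {q ε a b c : ℝ} (hq2 : 2 < q) (hq3 : q < 3) (ha : 0 ≤ a)
    (hb : 0 ≤ b) (hc : 0 ≤ c) (hcε : c ≤ ε) :
    a * b * c ≤ (1 / q * a ^ q + 1 / q * b ^ q + (q - 2) / q * c ^ q) * ε ^ (3 - q) := by
  have hq : 0 < q := by linarith
  have h1 := Real.geom_mean_le_arith_mean3_weighted (w₁ := 1 / q) (w₂ := 1 / q)
    (w₃ := (q - 2) / q) (by positivity) (by positivity)
    (div_nonneg (by linarith) hq.le) (Real.rpow_nonneg ha q) (Real.rpow_nonneg hb q)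
    (Real.rpow_nonneg hc q) (by field_simp; ring)
  rw [← Real.rpow_mul ha, ← Real.rpow_mul hb, ← Real.rpow_mul hc, mul_one_div_cancel hq.ne',
    mul_div_cancel₀ _ hq.ne', Real.rpow_one, Real.rpow_one] at h1
  have h2 : c = c ^ (q - 2) * c ^ (3 - q) := by
    rw [← Real.rpow_add_of_nonneg hc (by linarith) (by linarith)]
    norm_num
  have h3 : c ^ (3 - q) ≤ ε ^ (3 - q) := Real.rpow_le_rpow hc hcε (by linarith)
  calc a * b * c = (a * b * c ^ (q - 2)) * c ^ (3 - q) := by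
        conv_lhs => rw [h2]
        ring
    _ ≤ _ := mul_le_mul h1 h3 (Real.rpow_nonneg hc _)
        (le_trans (by positivity) h1)

/-- A ternary convolution is small when one factor is Fourier-uniform: if `‖ĥ‖_∞ ≤ ε` and
`f, g, h` all have `ℓ^q` Fourier norm at most `M` (with `2 < q < 3`), then for every `x`,
`|∑_{y,z} f(y) g(z) h(x - y - z)| ≤ M^q ε^{3-q} / N`. -/
theorem stmt16 (N : ℕ) [NeZero N] (q ε M : ℝ) (hq2 : 2 < q) (hq3 : q < 3)
    (hε : 0 < ε) (hM : 0 < M) (f g h : ZMod N → ℂ)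
    (hhinf : ∀ r : ZMod N, ‖zmodFourier h r‖ ≤ ε)
    (hfq : (∑ r : ZMod N, ‖zmodFourier f r‖ ^ q) ^ (1 / q) ≤ M)
    (hgq : (∑ r : ZMod N, ‖zmodFourier g r‖ ^ q) ^ (1 / q) ≤ M)
    (hhq : (∑ r : ZMod N, ‖zmodFourier h r‖ ^ q) ^ (1 / q) ≤ M) :
    ∀ x : ZMod N,
      ‖∑ y : ZMod N, ∑ z : ZMod N, f y * g z * h (x - y - z)‖ ≤
        M ^ q * ε ^ (3 - q) / N := by
  intro x
  have hq : 0 < q := by linarith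
  have hN : (0 : ℝ) < N := by exact_mod_cast Nat.pos_of_ne_zero (NeZero.ne N)
  have nn : ∀ k : ZMod N → ℂ, 0 ≤ ∑ r : ZMod N, ‖zmodFourier k r‖ ^ q := fun k =>
    Finset.sum_nonneg fun r _ => Real.rpow_nonneg (norm_nonneg _) _
  have hf := sum_le_of_norm_le hq (nn f) hfq
  have hg := sum_le_of_norm_le hq (nn g) hgq
  have hh := sum_le_of_norm_le hq (nn h) hhq
  rw [le_div_iff₀ hN, mul_comm]
  have e : (N : ℝ) * ‖∑ y : ZMod N, ∑ z : ZMod N, f y * g z * h (x - y - z)‖ =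
      ‖(N : ℂ) * ∑ y : ZMod N, ∑ z : ZMod N, f y * g z * h (x - y - z)‖ := by
    rw [norm_mul, Complex.norm_natCast]
  rw [e, ternary_inversion]
  calc _ ≤ ∑ r : ZMod N, ‖zmodFourier f r‖ * ‖zmodFourier g r‖ * ‖zmodFourier h r‖ := by
        refine (norm_sum_le _ _).trans (le_of_eq (Finset.sum_congr rfl fun r _ => ?_))
        rw [norm_mul, norm_mul, norm_mul, AddChar.norm_apply, mul_one]
    _ ≤ ∑ r : ZMod N, (1 / q * ‖zmodFourier f r‖ ^ q + 1 / q * ‖zmodFourier g r‖ ^ q +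
          (q - 2) / q * ‖zmodFourier h r‖ ^ q) * ε ^ (3 - q) :=
        Finset.sum_le_sum fun r _ => pointwise_young hq2 hq3 (norm_nonneg _) (norm_nonneg _)
          (norm_nonneg _) (hhinf r)
    _ = (1 / q * ∑ r : ZMod N, ‖zmodFourier f r‖ ^ q + 1 / q * ∑ r : ZMod N,
          ‖zmodFourier g r‖ ^ q + (q - 2) / q * ∑ r : ZMod N, ‖zmodFourier h r‖ ^ q) *
          ε ^ (3 - q) := by
        rw [← Finset.sum_mul, Finset.sum_add_distrib, Finset.sum_add_distrib,
          Finset.mul_sum, Finset.mul_sum, Finset.mul_sum]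
    _ ≤ (1 / q * M ^ q + 1 / q * M ^ q + (q - 2) / q * M ^ q) * ε ^ (3 - q) := by
        have : 0 ≤ (q - 2) / q := div_nonneg (by linarith) hq.le
        gcongr
    _ = M ^ q * ε ^ (3 - q) := by
        field_simp
        ring
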